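/- arXiv:2510.01522 — 2 statements merged into one kernel-verified Lean document; each statement's English description precedes it below -/
import Mathlib

section
/- Let m ∈ ℕ with m ≥ 2, ε ∈ (0, 1/2), h > 0, and δ ≥ 2√2·(6ε + σ‖W‖/n). Suppose ẑ ∈ ℂ_1^n satisfies ẑ = F_1(ẑ) and ℓ_1(ẑ, z*) ≤ ε², and V̂ ∈ 𝒱_m satisfies V̂ = F_m(V̂) and ℓ_m(V̂, z*) ≤ ε². For each k = 0, 1, …, ⌈nε/h⌉ set s_k = n − kh ∈ ℝ, and for each j ∈ [n] let z_{s_k}^{(−j)} ∈ ℂ_{≤1}^n be the fixed point of G^{(−j)}(·, s_k, 2δn). Then ℓ_m(V̂, ẑ) ≤ 72·Σ_{k=0}^{⌈nε/h⌉} ( (1/n)·Σ_{j=1}^n 1{ σ·|[W z_{s_k}^{(−j)}]_j| > (1 − ε − 4δ − 3σ‖W‖/n)·n − h } ) + (72h²/(δ²n²))·1{h > δ√n}. -/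
open scoped Classical
open Matrix

noncomputable section

namespace PhaseSync

/-- Euclidean norm of a complex vector. -/
def enorm {k : ℕ} (v : Fin k → ℂ) : ℝ := Real.sqrt (∑ i, ‖v i‖ ^ 2)

/-- Frobenius norm of a complex matrix. -/
def fnorm {k l : ℕ} (A : Matrix (Fin k) (Fin l) ℂ) : ℝ :=
  Real.sqrt (∑ i, ∑ j, ‖A i j‖ ^ 2)

/-- L2 operator norm of a square complex matrix. -/
def opNorm {k : ℕ} (A : Matrix (Fin k) (Fin k) ℂ) : ℝ :=
  ‖Matrix.toEuclideanCLM (𝕜 := ℂ) (n := Fin k) A‖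

/-- Indicator function of a proposition. -/
def ind (P : Prop) : ℝ := if P then 1 else 0

/-- The loss ℓ_m(V, z) = min_{a : ‖a‖=1} ‖V - a zᴴ‖_F² / n. -/
def lossM {k l : ℕ} (V : Matrix (Fin k) (Fin l) ℂ) (z : Fin l → ℂ) : ℝ :=
  sInf { r : ℝ | ∃ a : Fin k → ℂ, enorm a = 1 ∧
    r = fnorm (V - Matrix.vecMulVec a (star z)) ^ 2 / l }

/-- The loss ℓ_1(z', z) = min_{|a|=1} ‖z' - a z‖² / n. -/
def loss1 {l : ℕ} (z' z : Fin l → ℂ) : ℝ :=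
  sInf { r : ℝ | ∃ a : ℂ, ‖a‖ = 1 ∧ r = enorm (z' - a • z) ^ 2 / l }

/-- The mapping F₁: entrywise normalization of Y z. -/
def F1 {l : ℕ} (Y : Matrix (Fin l) (Fin l) ℂ) (z : Fin l → ℂ) : Fin l → ℂ :=
  fun j => if Y.mulVec z j ≠ 0 then Y.mulVec z j / (‖Y.mulVec z j‖ : ℂ) else z j

/-- jth column of a matrix. -/
def col {k l : ℕ} (A : Matrix (Fin k) (Fin l) ℂ) (j : Fin l) : Fin k → ℂ := fun i => A i j

/-- The mapping F_m: columnwise normalization of V Yᴴ. -/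
def Fm {k l : ℕ} (Y : Matrix (Fin l) (Fin l) ℂ) (V : Matrix (Fin k) (Fin l) ℂ) :
    Matrix (Fin k) (Fin l) ℂ :=
  Matrix.of fun i j =>
    if col (V * Yᴴ) j ≠ 0 then (V * Yᴴ) i j / ((enorm (col (V * Yᴴ) j) : ℝ) : ℂ) else V i j

/-- g_t(x) = x / max(|x|, t). -/
def gfun (t : ℝ) (x : ℂ) : ℂ := x / ((max (‖x‖) t : ℝ) : ℂ)

/-- The mapping G(z, s, t), coordinatewise g_t(z*_j s + σ [W z]_j). -/
def G {l : ℕ} (zstar : Fin l → ℂ) (σ : ℝ) (W : Matrix (Fin l) (Fin l) ℂ)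
    (z : Fin l → ℂ) (s : ℂ) (t : ℝ) : Fin l → ℂ :=
  fun j => gfun t (zstar j * s + (σ : ℂ) * W.mulVec z j)

/-- The mapping F₁'(z, s), entrywise normalization of z* s + σ W z. -/
def F1' {l : ℕ} (zstar : Fin l → ℂ) (σ : ℝ) (W : Matrix (Fin l) (Fin l) ℂ)
    (z : Fin l → ℂ) (s : ℂ) : Fin l → ℂ :=
  fun j =>
    if zstar j * s + (σ : ℂ) * W.mulVec z j ≠ 0 then
      (zstar j * s + (σ : ℂ) * W.mulVec z j) /
        ((‖zstar j * s + (σ : ℂ) * W.mulVec z j‖ : ℝ) : ℂ)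
    else z j

/-- W with jth row and column zeroed out. -/
def Wminus {l : ℕ} (W : Matrix (Fin l) (Fin l) ℂ) (j : Fin l) : Matrix (Fin l) (Fin l) ℂ :=
  Matrix.of fun k i => if k = j ∨ i = j then 0 else W k i

/-!
With `A = σ W` and `Y = z* z*ᴴ + A`, both fixed-point equations say that unit vectors `v_j` are
parallel to the fields `(Y v)_j`, for scalars in the case of `ẑ` and for the conjugated columns in
the case of `V̂`. Put `T = δ n` and call `j` bad if `|(Y ẑ)_j| < 2 T`. Rotate both solutions so that
their correlations with `z*` point in a common direction.

* Normalization is Lipschitz away from zero, so off the bad set the distance between the two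
  solutions is controlled by the difference of their correlations and by the noise. Both
  correlations nearly attain their maximum `n`, hence differ by at most `ε √n` times the distance of
  the solutions. The threshold `T` absorbs both terms, and `n ℓ_m(V̂, ẑ)` is at most `10` times the
  number of bad coordinates.
* The correlation of `ẑ` with `z*` is some `s ∈ [n - n ε, n]`, within `h` of a grid point `s_k`. By
  the same argument `ẑ` is close to the truncated fixed point `ζ` at `s_k`, up to the bad set and
  the grid error, and `ζ` differs from its leave-one-out versions by at most `3` in norm. Hence at a
  bad coordinate `j` either `|(A (ẑ - ζ))_j|` is large, which happens for at most a fraction `32/49`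
  of the bad coordinates (up to the grid error), or the leave-one-out noise at `j` exceeds the
  stated threshold.
* If `h ≤ δ √n`, the grid error in this count is below one coordinate and integrality removes it.
-/

section Families

variable {ι E F : Type*} [Fintype ι] [NormedAddCommGroup E] [NormedAddCommGroup F]

lemma norm_le_of_forall_norm_apply_le {f : PiLp 2 fun _ : ι => E} {g : PiLp 2 fun _ : ι => F}
    (h : ∀ j, ‖f j‖ ≤ ‖g j‖) : ‖f‖ ≤ ‖g‖ := by
  simp only [PiLp.norm_eq_of_L2]
  gcongr
  exact h _

lemma norm_toLp_indicator (B : Finset ι) {ρ : ℝ} (hρ : 0 ≤ ρ) :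
    ‖WithLp.toLp 2 fun j => if j ∈ B then ρ else 0‖ = ρ * √B.card := by
  rw [EuclideanSpace.norm_eq]
  simp only [ite_pow, Real.norm_eq_abs, sq_abs, ne_eq, OfNat.ofNat_ne_zero, not_false_eq_true,
    zero_pow, Finset.sum_ite_mem, Finset.univ_inter, Finset.sum_const, nsmul_eq_mul]
  rw [Real.sqrt_mul (Nat.cast_nonneg _), Real.sqrt_sq hρ, mul_comm]

lemma norm_le_of_norm_apply_le_off {f : PiLp 2 fun _ : ι => E} {g : PiLp 2 fun _ : ι => F}
    {B : Finset ι} {ρ α : ℝ} (hρ : 0 ≤ ρ) (hα : 0 ≤ α) (hB : ∀ j ∈ B, ‖f j‖ ≤ ρ)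
    (hoff : ∀ j ∉ B, ‖f j‖ ≤ α + ‖g j‖) :
    ‖f‖ ≤ ρ * √B.card + α * √(Fintype.card ι) + ‖g‖ := by
  let onB : EuclideanSpace ℝ ι := WithLp.toLp 2 fun j => if j ∈ B then ρ else 0
  let const : EuclideanSpace ℝ ι :=
    WithLp.toLp 2 fun j => if j ∈ (Finset.univ : Finset ι) then α else 0
  let normG : EuclideanSpace ℝ ι := WithLp.toLp 2 fun j => ‖g j‖
  have hpoint : ∀ j, ‖f j‖ ≤ ‖(onB + const + normG) j‖ := fun j => by
    refine le_trans ?_ (Real.le_norm_self _)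
    have := norm_nonneg (g j)
    by_cases hj : j ∈ B
    · simpa [onB, const, normG, hj] using by linarith [hB j hj]
    · simpa [onB, const, normG, hj] using hoff j hj
  have hnormG : ‖normG‖ = ‖g‖ := by simp [normG, PiLp.norm_eq_of_L2]
  calc ‖f‖ ≤ ‖onB + const + normG‖ := norm_le_of_forall_norm_apply_le hpoint
    _ ≤ ‖onB‖ + ‖const‖ + ‖normG‖ := norm_add₃_le
    _ = ρ * √B.card + α * √(Fintype.card ι) + ‖g‖ := by
      rw [hnormG, norm_toLp_indicator B hρ, norm_toLp_indicator Finset.univ hα, Finset.card_univ]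

lemma card_mul_sq_le_norm_sq {f : PiLp 2 fun _ : ι => E} {C : Finset ι} {r : ℝ} (hr : 0 ≤ r)
    (h : ∀ j ∈ C, r ≤ ‖f j‖) : C.card * r ^ 2 ≤ ‖f‖ ^ 2 := by
  rw [PiLp.norm_sq_eq_of_L2]
  calc C.card * r ^ 2 = ∑ _j ∈ C, r ^ 2 := by simp
    _ ≤ ∑ j ∈ C, ‖f j‖ ^ 2 := Finset.sum_le_sum fun j hj => pow_le_pow_left₀ hr (h j hj) 2
    _ ≤ ∑ j, ‖f j‖ ^ 2 :=
      Finset.sum_le_sum_of_subset_of_nonneg (Finset.subset_univ _) fun _ _ _ => by positivity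

end Families

section Operators

variable {ι E : Type*} [NormedAddCommGroup E] [NormedSpace ℂ E]

/-- The rank-one family `j ↦ z_j c`, which is `c zᵀ` written columnwise. -/
def outer (z : ι → ℂ) (c : E) : PiLp 2 fun _ : ι => E := WithLp.toLp 2 fun j => z j • c

@[simp]
lemma outer_apply (z : ι → ℂ) (c : E) (j : ι) : outer z c j = z j • c := rfl

lemma outer_outer (z : ι → ℂ) (w : ℂ) (c : E) : outer (outer z w) c = outer z (w • c) := by
  ext j
  simp [smul_smul]

variable [Fintype ι]

/-- The action of a scalar matrix on a family of vectors, `(A v)_j = ∑ k, A_{jk} v_k`. With `E = ℂ`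
it is the matrix-vector product, and with `v` the conjugated columns of `V` it gives the conjugated
columns of `V Aᴴ`. -/
def blockAct (A : Matrix ι ι ℂ) : (PiLp 2 fun _ : ι => E) →ₗ[ℂ] PiLp 2 fun _ : ι => E where
  toFun v := WithLp.toLp 2 fun j => ∑ k, A j k • v k
  map_add' u v := by ext j; simp [Finset.sum_add_distrib]
  map_smul' a v := by
    ext j
    simp only [PiLp.smul_apply, RingHom.id_apply, Finset.smul_sum, smul_comm a]

@[simp]
lemma blockAct_apply (A : Matrix ι ι ℂ) (v : PiLp 2 fun _ : ι => E) (j : ι) :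
    blockAct A v j = ∑ k, A j k • v k := rfl

lemma blockAct_eq_mulVec (A : Matrix ι ι ℂ) (z : EuclideanSpace ℂ ι) (j : ι) :
    blockAct A z j = A.mulVec z j := by
  simp [Matrix.mulVec, dotProduct]

/-- The correlation `∑ j, conj(z_j) v_j` of a family of vectors with a vector of phases. -/
def correlation (z : ι → ℂ) (v : PiLp 2 fun _ : ι => E) : E := ∑ j, starRingEnd ℂ (z j) • v j

lemma blockAct_outer (A : Matrix ι ι ℂ) (z : EuclideanSpace ℂ ι) (c : E) :
    blockAct A (outer z c) = outer (blockAct A z) c := by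
  ext j
  simp [Finset.sum_smul, smul_smul]

lemma correlation_outer (zstar : ι → ℂ) (z : EuclideanSpace ℂ ι) (c : E) :
    correlation zstar (outer z c) = correlation zstar z • c := by
  simp [correlation, Finset.sum_smul, smul_smul]

lemma correlation_sub (z : ι → ℂ) (f g : PiLp 2 fun _ : ι => E) :
    correlation z (f - g) = correlation z f - correlation z g := by
  simp [correlation, smul_sub]

/-- The matrix `z* z*ᴴ + A`: a rank-one signal observed through the noise `A`. -/
def spiked (zstar : ι → ℂ) (A : Matrix ι ι ℂ) : Matrix ι ι ℂ :=
  Matrix.vecMulVec zstar (star zstar) + A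

lemma blockAct_spiked (zstar : ι → ℂ) (A : Matrix ι ι ℂ) (v : PiLp 2 fun _ : ι => E) :
    blockAct (spiked zstar A) v = outer zstar (correlation zstar v) + blockAct A v := by
  ext j
  simp [spiked, correlation, Matrix.vecMulVec_apply, add_smul, Finset.sum_add_distrib,
    Finset.smul_sum, smul_smul]

lemma norm_blockAct_spiked_apply_le {zstar : ι → ℂ} (hzstar : ∀ j, ‖zstar j‖ = 1)
    (A : Matrix ι ι ℂ) (v : PiLp 2 fun _ : ι => E) (j : ι) :
    ‖blockAct (spiked zstar A) v j‖ ≤ ‖correlation zstar v‖ + ‖blockAct A v j‖ := by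
  rw [blockAct_spiked, PiLp.add_apply, outer_apply]
  exact (norm_add_le _ _).trans_eq (by rw [norm_smul, hzstar, one_mul])

end Operators

section OperatorNorm

variable {E : Type*} [NormedAddCommGroup E] [InnerProductSpace ℂ E] {n : ℕ}

lemma opNorm_nonneg (A : Matrix (Fin n) (Fin n) ℂ) : 0 ≤ opNorm A := norm_nonneg _

lemma opNorm_real_smul {σ : ℝ} (hσ : 0 ≤ σ) (W : Matrix (Fin n) (Fin n) ℂ) :
    opNorm ((σ : ℂ) • W) = σ * opNorm W := by
  rw [opNorm, map_smul, norm_smul, Complex.norm_of_nonneg hσ, opNorm]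

lemma norm_blockAct_le_of_scalar (A : Matrix (Fin n) (Fin n) ℂ)
    (z : EuclideanSpace ℂ (Fin n)) : ‖blockAct A z‖ ≤ opNorm A * ‖z‖ :=
  (Matrix.toEuclideanCLM (𝕜 := ℂ) (n := Fin n) A).le_opNorm z

lemma norm_blockAct_le [FiniteDimensional ℂ E] (A : Matrix (Fin n) (Fin n) ℂ)
    (v : PiLp 2 fun _ : Fin n => E) : ‖blockAct A v‖ ≤ opNorm A * ‖v‖ := by
  let b := stdOrthonormalBasis ℂ E
  let coord (v : PiLp 2 fun _ : Fin n => E) (i) : EuclideanSpace ℂ (Fin n) :=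
    WithLp.toLp 2 fun k => inner ℂ (b i) (v k)
  have norm_sq_eq_sum_coord (v : PiLp 2 fun _ : Fin n => E) : ‖v‖ ^ 2 = ∑ i, ‖coord v i‖ ^ 2 := by
    simp only [PiLp.norm_sq_eq_of_L2, coord]
    rw [Finset.sum_comm]
    simp only [b.sum_sq_norm_inner_right]
  have coord_blockAct (i) : coord (blockAct A v) i = blockAct A (coord v i) := by
    ext j
    simp [coord]
  refine le_of_sq_le_sq ?_ (mul_nonneg (opNorm_nonneg A) (norm_nonneg v))
  calc ‖blockAct A v‖ ^ 2 = ∑ i, ‖blockAct A (coord v i)‖ ^ 2 := by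
        simp only [norm_sq_eq_sum_coord, coord_blockAct]
    _ ≤ ∑ i, (opNorm A * ‖coord v i‖) ^ 2 := by
        gcongr
        exact norm_blockAct_le_of_scalar A _
    _ = (opNorm A * ‖v‖) ^ 2 := by
        simp only [mul_pow, ← Finset.mul_sum, norm_sq_eq_sum_coord v]

lemma mul_norm_le_of_norm_apply_le_off [FiniteDimensional ℂ E]
    {A : Matrix (Fin n) (Fin n) ℂ} {d : PiLp 2 fun _ : Fin n => E} {B : Finset (Fin n)} {T α : ℝ}
    (hT : 0 ≤ T) (hα : 0 ≤ α) (hB : ∀ j ∈ B, ‖d j‖ ≤ 2)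
    (hoff : ∀ j ∉ B, T * ‖d j‖ ≤ α + ‖blockAct A d j‖) :
    T * ‖d‖ ≤ 2 * T * √B.card + α * √n + opNorm A * ‖d‖ := by
  have norm_T_smul {G : Type _} [NormedAddCommGroup G] [NormedSpace ℂ G] (x : G) :
      ‖(T : ℂ) • x‖ = T * ‖x‖ := by rw [norm_smul, Complex.norm_of_nonneg hT]
  have hnorm : ‖(T : ℂ) • d‖ ≤ 2 * T * √B.card + α * √(Fintype.card (Fin n)) + ‖blockAct A d‖ := by
    refine norm_le_of_norm_apply_le_off (by positivity) hα (fun j hj => ?_) fun j hj => ?_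
    · rw [PiLp.smul_apply, norm_T_smul, mul_comm 2 T]
      exact mul_le_mul_of_nonneg_left (hB j hj) hT
    · rw [PiLp.smul_apply, norm_T_smul]
      exact hoff j hj
  rw [norm_T_smul, Fintype.card_fin] at hnorm
  exact hnorm.trans (by gcongr; exact norm_blockAct_le A d)

end OperatorNorm

section Truncation

variable {E : Type*} [NormedAddCommGroup E] [NormedSpace ℂ E]

lemma mul_norm_sub_le_of_smul_eq {M N : ℝ} {u w x y : E} (hM : 0 ≤ M) (hu : (M : ℂ) • u = x)
    (hw : (N : ℂ) • w = y) (hw_le : ‖w‖ ≤ 1) (hMN : |N - M| ≤ ‖x - y‖) :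
    M * ‖u - w‖ ≤ 2 * ‖x - y‖ := by
  have hdecomp : (M : ℂ) • (u - w) = (x - y) + ((N - M : ℝ) : ℂ) • w := by
    rw [← hu, ← hw]
    push_cast
    module
  calc M * ‖u - w‖ = ‖(x - y) + ((N - M : ℝ) : ℂ) • w‖ := by
        rw [← hdecomp, norm_smul, Complex.norm_of_nonneg hM]
    _ ≤ ‖x - y‖ + |N - M| * ‖w‖ := by
        simpa only [norm_smul, Complex.norm_real, Real.norm_eq_abs] using
          norm_add_le (x - y) (((N - M : ℝ) : ℂ) • w)
    _ ≤ ‖x - y‖ + ‖x - y‖ * 1 := by gcongr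
    _ = 2 * ‖x - y‖ := by ring

lemma max_norm_smul_gfun {t : ℝ} (ht : 0 < t) (y : ℂ) :
    ((max ‖y‖ t : ℝ) : ℂ) • gfun t y = y :=
  mul_div_cancel₀ y (Complex.ofReal_ne_zero.2 (lt_max_of_lt_right ht).ne')

lemma norm_gfun_le_one (t : ℝ) (y : ℂ) : ‖gfun t y‖ ≤ 1 := by
  have hmax : 0 ≤ max ‖y‖ t := le_max_of_le_left (norm_nonneg y)
  rw [gfun, norm_div, Complex.norm_of_nonneg hmax]
  exact div_le_one_of_le₀ (le_max_left _ _) hmax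

lemma abs_max_norm_sub_max_norm_le (t : ℝ) (x y : ℂ) :
    |max ‖y‖ t - max ‖x‖ t| ≤ ‖x - y‖ :=
  (abs_max_sub_max_le_abs _ _ _).trans (norm_sub_rev x y ▸ abs_norm_sub_norm_le y x)

lemma mul_norm_gfun_sub_gfun_le {t : ℝ} (ht : 0 < t) (x y : ℂ) :
    t * ‖gfun t x - gfun t y‖ ≤ 2 * ‖x - y‖ :=
  calc t * ‖gfun t x - gfun t y‖ ≤ max ‖x‖ t * ‖gfun t x - gfun t y‖ := by
        gcongr
        exact le_max_right _ _
    _ ≤ 2 * ‖x - y‖ :=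
        mul_norm_sub_le_of_smul_eq (le_max_of_le_right ht.le) (max_norm_smul_gfun ht x)
          (max_norm_smul_gfun ht y) (norm_gfun_le_one t y) (abs_max_norm_sub_max_norm_le t x y)

lemma mul_norm_sub_gfun_le {t : ℝ} (ht : 0 < t) {x z : ℂ} (y : ℂ) (hz : (‖x‖ : ℂ) • z = x)
    (hx : t ≤ ‖x‖) : t * ‖z - gfun t y‖ ≤ 2 * ‖x - y‖ := by
  have hgfun : gfun t x = z := by
    have hx0 : (‖x‖ : ℂ) ≠ 0 := Complex.ofReal_ne_zero.2 (ht.trans_le hx).ne'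
    rw [gfun, max_eq_left hx, div_eq_iff hx0, mul_comm]
    exact hz.symm
  exact hgfun ▸ mul_norm_gfun_sub_gfun_le ht x y

end Truncation

section LeaveOneOut

variable {n : ℕ} {zstar : Fin n → ℂ} {A : Matrix (Fin n) (Fin n) ℂ} {s t : ℝ}

/-- Fixed points of `z ↦ G zstar σ W z s t`, with the noise written as a single matrix `A = σ W`. -/
def IsTruncatedFixedPoint (zstar : Fin n → ℂ) (A : Matrix (Fin n) (Fin n) ℂ) (s t : ℝ)
    (z : EuclideanSpace ℂ (Fin n)) : Prop :=
  ∀ j, z j = gfun t ((outer zstar (s : ℂ) + blockAct A z) j)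

lemma IsTruncatedFixedPoint.norm_apply_le_one {z : EuclideanSpace ℂ (Fin n)}
    (hz : IsTruncatedFixedPoint zstar A s t z) (j : Fin n) : ‖z j‖ ≤ 1 :=
  hz j ▸ norm_gfun_le_one _ _

lemma isTruncatedFixedPoint_of_eq_G {σ : ℝ} {W : Matrix (Fin n) (Fin n) ℂ} {z : Fin n → ℂ}
    (hz : z = G zstar σ W z s t) :
    IsTruncatedFixedPoint zstar ((σ : ℂ) • W) s t (WithLp.toLp 2 z) := fun j => by
  rw [PiLp.add_apply, blockAct_eq_mulVec, Matrix.smul_mulVec]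
  exact congrFun hz j

lemma exists_isTruncatedFixedPoint (zstar : Fin n → ℂ) (A : Matrix (Fin n) (Fin n) ℂ) (s : ℝ)
    (ht : 2 * opNorm A < t) : ∃ z, IsTruncatedFixedPoint zstar A s t z := by
  have hA := opNorm_nonneg A
  have ht0 : 0 < t := by linarith
  let step (z : EuclideanSpace ℂ (Fin n)) : EuclideanSpace ℂ (Fin n) :=
    WithLp.toLp 2 fun j => gfun t ((outer zstar (s : ℂ) + blockAct A z) j)
  have hstep (x y) : t * ‖step x - step y‖ ≤ 2 * opNorm A * ‖x - y‖ := by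
    have hpoint (j) : ‖((t : ℂ) • (step x - step y)) j‖ ≤ ‖((2 : ℂ) • blockAct A (x - y)) j‖ := by
      have hfield : (outer zstar (s : ℂ) + blockAct A x) j - (outer zstar (s : ℂ) + blockAct A y) j
          = blockAct A (x - y) j := by
        rw [← PiLp.sub_apply, add_sub_add_left_eq_sub, map_sub]
      rw [PiLp.smul_apply, PiLp.smul_apply, norm_smul, norm_smul, Complex.norm_of_nonneg ht0.le,
        Complex.norm_two, ← hfield]
      exact mul_norm_gfun_sub_gfun_le ht0 _ _
    have hnorm := norm_le_of_forall_norm_apply_le hpoint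
    rw [norm_smul, norm_smul, Complex.norm_of_nonneg ht0.le, Complex.norm_two] at hnorm
    linarith [norm_blockAct_le A (x - y)]
  have hcontracting : ContractingWith (NNReal.mk (2 * opNorm A / t) (by positivity)) step := by
    refine ⟨?_, LipschitzWith.of_dist_le_mul fun x y => ?_⟩
    · exact_mod_cast (div_lt_one ht0).2 ht
    · rw [dist_eq_norm, dist_eq_norm, NNReal.coe_mk, div_mul_eq_mul_div, le_div_iff₀ ht0, mul_comm]
      exact hstep x y
  exact ⟨hcontracting.fixedPoint step,
    fun j => congrArg (fun z => z j) hcontracting.fixedPoint_isFixedPt.symm⟩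

lemma smul_Wminus (a : ℂ) (W : Matrix (Fin n) (Fin n) ℂ) (j : Fin n) :
    a • Wminus W j = Wminus (a • W) j := by
  ext i k
  simp [Wminus]

/-- The vector `z` with its `j`-th coordinate set to zero. -/
def eraseCoord (j : Fin n) (z : EuclideanSpace ℂ (Fin n)) : EuclideanSpace ℂ (Fin n) :=
  z - PiLp.single 2 j (z j)

lemma eraseCoord_self (j : Fin n) (z : EuclideanSpace ℂ (Fin n)) : eraseCoord j z j = 0 := by
  simp [eraseCoord]

lemma eraseCoord_of_ne {i j : Fin n} (hij : i ≠ j) (z : EuclideanSpace ℂ (Fin n)) :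
    eraseCoord j z i = z i := by
  simp [eraseCoord, hij]

lemma norm_sub_eraseCoord (j : Fin n) (z : EuclideanSpace ℂ (Fin n)) :
    ‖z - eraseCoord j z‖ = ‖z j‖ := by
  rw [eraseCoord, sub_sub_cancel, PiLp.norm_single]

lemma sub_eraseCoord_eq (j : Fin n) (z z' : EuclideanSpace ℂ (Fin n)) :
    z - eraseCoord j z' = eraseCoord j (z - z') + (z - eraseCoord j z) := by
  ext i
  by_cases hij : i = j
  · simp [hij, eraseCoord_self]
  · simp [eraseCoord_of_ne hij]

lemma blockAct_Wminus_apply (A : Matrix (Fin n) (Fin n) ℂ) (z : EuclideanSpace ℂ (Fin n))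
    {i j : Fin n} (hij : i ≠ j) :
    blockAct (Wminus A j) z i = blockAct A (eraseCoord j z) i := by
  simp only [blockAct_apply]
  refine Finset.sum_congr rfl fun k _ => ?_
  by_cases hk : k = j
  · simp [Wminus, hk, eraseCoord_self]
  · simp [Wminus, hij, hk, eraseCoord_of_ne hk]

variable {z z' : EuclideanSpace ℂ (Fin n)} {j : Fin n}

lemma mul_norm_eraseCoord_sub_le {T : ℝ} (hT : 0 < T)
    (hz : IsTruncatedFixedPoint zstar A s (2 * T) z)
    (hz' : IsTruncatedFixedPoint zstar (Wminus A j) s (2 * T) z') :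
    T * ‖eraseCoord j (z - z')‖ ≤ opNorm A * (‖eraseCoord j (z - z')‖ + 1) := by
  set d := eraseCoord j (z - z') with hd
  have hfield (i) (hij : i ≠ j) :
      (outer zstar (s : ℂ) + blockAct A z) i - (outer zstar (s : ℂ) + blockAct (Wminus A j) z') i
        = blockAct A (z - eraseCoord j z') i := by
    rw [PiLp.add_apply, PiLp.add_apply, add_sub_add_left_eq_sub, blockAct_Wminus_apply A z' hij,
      map_sub, PiLp.sub_apply]
  have hpoint (i) : ‖((T : ℂ) • d) i‖ ≤ ‖blockAct A (z - eraseCoord j z') i‖ := by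
    rw [PiLp.smul_apply, norm_smul, Complex.norm_of_nonneg hT.le]
    by_cases hij : i = j
    · rw [hij, hd, eraseCoord_self, norm_zero, mul_zero]
      exact norm_nonneg _
    · have hgfun := mul_norm_gfun_sub_gfun_le (mul_pos two_pos hT)
        ((outer zstar (s : ℂ) + blockAct A z) i)
        ((outer zstar (s : ℂ) + blockAct (Wminus A j) z') i)
      rw [hfield i hij, ← hz i, ← hz' i] at hgfun
      rw [hd, eraseCoord_of_ne hij, PiLp.sub_apply]
      linarith
  calc T * ‖d‖ = ‖(T : ℂ) • d‖ := by rw [norm_smul, Complex.norm_of_nonneg hT.le]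
    _ ≤ ‖blockAct A (z - eraseCoord j z')‖ := norm_le_of_forall_norm_apply_le hpoint
    _ ≤ opNorm A * ‖z - eraseCoord j z'‖ := norm_blockAct_le A _
    _ ≤ opNorm A * (‖d‖ + 1) := by
        refine mul_le_mul_of_nonneg_left ?_ (opNorm_nonneg A)
        rw [sub_eraseCoord_eq]
        refine (norm_add_le _ _).trans ?_
        rw [norm_sub_eraseCoord]
        gcongr
        exact hz.norm_apply_le_one j

lemma norm_blockAct_sub_leaveOneOut_le {T : ℝ} (hT : 0 < T) (hA : 2 * opNorm A ≤ T)
    (hz : IsTruncatedFixedPoint zstar A s (2 * T) z)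
    (hz' : IsTruncatedFixedPoint zstar (Wminus A j) s (2 * T) z') :
    ‖blockAct A (z - z') j‖ ≤ 3 * opNorm A := by
  have herase_le : ‖eraseCoord j (z - z')‖ ≤ 1 := by
    have := mul_norm_eraseCoord_sub_le hT hz hz'
    refine le_of_mul_le_mul_left ?_ hT
    nlinarith [norm_nonneg (eraseCoord j (z - z'))]
  have hcoord_le : ‖(z - z') j‖ ≤ 2 := by
    rw [PiLp.sub_apply]
    exact (norm_sub_le _ _).trans (by linarith [hz.norm_apply_le_one j, hz'.norm_apply_le_one j])
  have hsub_le : ‖z - z'‖ ≤ 3 := by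
    have htri := norm_le_norm_add_norm_sub (eraseCoord j (z - z')) (z - z')
    rw [norm_sub_rev _ (z - z'), norm_sub_eraseCoord] at htri
    linarith
  calc ‖blockAct A (z - z') j‖ ≤ ‖blockAct A (z - z')‖ := PiLp.norm_apply_le _ _
    _ ≤ opNorm A * ‖z - z'‖ := norm_blockAct_le A _
    _ ≤ opNorm A * 3 := mul_le_mul_of_nonneg_left hsub_le (opNorm_nonneg A)
    _ = 3 * opNorm A := mul_comm _ _

end LeaveOneOut

section Correlation

variable {ι E : Type*} [Fintype ι] [NormedAddCommGroup E] [InnerProductSpace ℂ E]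
  {z : ι → ℂ} {v f g : PiLp 2 fun _ : ι => E} {c : E}

lemma norm_sub_outer_sq (hz : ∀ j, ‖z j‖ = 1) (hv : ∀ j, ‖v j‖ = 1) (hc : ‖c‖ = 1) :
    ‖v - outer z c‖ ^ 2 = 2 * Fintype.card ι - 2 * (inner ℂ c (correlation z v)).re := by
  have hpoint (j) :
      ‖(v - outer z c) j‖ ^ 2 = 2 - 2 * (inner ℂ c (starRingEnd ℂ (z j) • v j)).re := by
    have hinner : RCLike.re (inner ℂ (v j) (z j • c)) =
        (inner ℂ c (starRingEnd ℂ (z j) • v j)).re := by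
      rw [← inner_conj_symm, inner_smul_left, inner_smul_right]
      exact Complex.conj_re _
    rw [PiLp.sub_apply, outer_apply, @norm_sub_sq ℂ, norm_smul, hv, hz, hc, hinner]
    ring
  rw [PiLp.norm_sq_eq_of_L2, Finset.sum_congr rfl fun j _ => hpoint j, correlation, inner_sum,
    Complex.re_sum, Finset.sum_sub_distrib, ← Finset.mul_sum, Finset.sum_const, Finset.card_univ,
    nsmul_eq_mul, mul_comm]

lemma sub_norm_correlation_le_norm_sub_outer_sq (hz : ∀ j, ‖z j‖ = 1) (hv : ∀ j, ‖v j‖ = 1)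
    (hc : ‖c‖ = 1) :
    2 * Fintype.card ι - 2 * ‖correlation z v‖ ≤ ‖v - outer z c‖ ^ 2 := by
  rw [norm_sub_outer_sq hz hv hc]
  have := (Complex.re_le_norm _).trans (norm_inner_le_norm (𝕜 := ℂ) c (correlation z v))
  rw [hc, one_mul] at this
  linarith

lemma norm_sub_outer_sq_of_correlation_eq (hz : ∀ j, ‖z j‖ = 1) (hv : ∀ j, ‖v j‖ = 1)
    (hc : ‖c‖ = 1) {s : ℝ} (hs : correlation z v = (s : ℂ) • c) :
    ‖v - outer z c‖ ^ 2 = 2 * Fintype.card ι - 2 * s := by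
  rw [norm_sub_outer_sq hz hv hc, hs, inner_smul_right, inner_self_eq_norm_sq_to_K, hc]
  simp

lemma norm_correlation_le (hz : ∀ j, ‖z j‖ = 1) (hv : ∀ j, ‖v j‖ = 1) :
    ‖correlation z v‖ ≤ Fintype.card ι := by
  refine (norm_sum_le _ _).trans_eq ?_
  simp [norm_smul, hz, hv]

lemma norm_correlation_sub_le (hz : ∀ j, ‖z j‖ = 1) (hf : ∀ j, ‖f j‖ = 1)
    (hg : ∀ j, ‖g j‖ = 1) (hc : ‖c‖ = 1) {s s' r : ℝ} (hs : correlation z f = (s : ℂ) • c)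
    (hs' : correlation z g = (s' : ℂ) • c) (hr : 0 ≤ r)
    (hsr : 2 * Fintype.card ι - 2 * s ≤ r ^ 2) (hsr' : 2 * Fintype.card ι - 2 * s' ≤ r ^ 2) :
    ‖correlation z (f - g)‖ ≤ r * ‖f - g‖ := by
  have hf_sq := norm_sub_outer_sq_of_correlation_eq hz hf hc hs
  have hg_sq := norm_sub_outer_sq_of_correlation_eq hz hg hc hs'
  have hf_le : ‖f - outer z c‖ ≤ r := le_of_sq_le_sq (hf_sq.trans_le hsr) hr
  have hg_le : ‖g - outer z c‖ ≤ r := le_of_sq_le_sq (hg_sq.trans_le hsr') hr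
  have hdiff : |‖g - outer z c‖ - ‖f - outer z c‖| ≤ ‖f - g‖ := by
    refine (abs_norm_sub_norm_le _ _).trans_eq ?_
    rw [sub_sub_sub_cancel_right, norm_sub_rev]
  have hfactor : 2 * (s - s') = (‖g - outer z c‖ + ‖f - outer z c‖) *
      (‖g - outer z c‖ - ‖f - outer z c‖) := by
    linear_combination hf_sq - hg_sq
  have habs : 2 * |s - s'| ≤ (r + r) * ‖f - g‖ := by
    calc 2 * |s - s'| = |2 * (s - s')| := by rw [abs_mul, abs_two]
      _ = (‖g - outer z c‖ + ‖f - outer z c‖) * |‖g - outer z c‖ - ‖f - outer z c‖| := by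
          rw [hfactor, abs_mul, abs_of_nonneg (by positivity)]
      _ ≤ (r + r) * ‖f - g‖ := by gcongr
  rw [correlation_sub, hs, hs', ← sub_smul, norm_smul, hc, mul_one, ← Complex.ofReal_sub,
    Complex.norm_real, Real.norm_eq_abs]
  linarith

end Correlation

section NormalizedFixedPoints

variable {ι E : Type*} [Fintype ι] [NormedAddCommGroup E] [NormedSpace ℂ E] {Y : Matrix ι ι ℂ}

/-- A family of unit vectors, each parallel to the corresponding entry of `Y v`. This covers the
fixed points of `F1 Y` (for `E = ℂ`) and, after conjugation, those of `Fm Y`. An entry of `Y v` that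
vanishes imposes no condition. -/
structure IsNormalizedFixedPoint (Y : Matrix ι ι ℂ) (v : PiLp 2 fun _ : ι => E) : Prop where
  norm_apply : ∀ j, ‖v j‖ = 1
  stationary : ∀ j, (‖blockAct Y v j‖ : ℂ) • v j = blockAct Y v j

/-- The coordinates at which the field `Y v` is smaller than `t`, so that normalization is not
stable there. -/
def badSet (Y : Matrix ι ι ℂ) (v : PiLp 2 fun _ : ι => E) (t : ℝ) : Finset ι :=
  Finset.univ.filter fun j => ‖blockAct Y v j‖ < t

lemma norm_blockAct_outer_apply (z : EuclideanSpace ℂ ι) {c : E} (hc : ‖c‖ = 1) (j : ι) :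
    ‖blockAct Y (outer z c) j‖ = ‖blockAct Y z j‖ := by
  rw [blockAct_outer, outer_apply, norm_smul, hc, mul_one]

lemma badSet_outer (z : EuclideanSpace ℂ ι) {c : E} (hc : ‖c‖ = 1) (t : ℝ) :
    badSet Y (outer z c) t = badSet Y z t := by
  simp only [badSet, norm_blockAct_outer_apply z hc]

lemma IsNormalizedFixedPoint.outer_of_norm_eq_one {z : EuclideanSpace ℂ ι}
    (hz : IsNormalizedFixedPoint Y z) {c : E} (hc : ‖c‖ = 1) :
    IsNormalizedFixedPoint Y (outer z c) where
  norm_apply j := by rw [outer_apply, norm_smul, hz.norm_apply, hc, mul_one]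
  stationary j := by
    rw [norm_blockAct_outer_apply z hc, blockAct_outer, outer_apply, outer_apply, smul_smul,
      ← smul_eq_mul, hz.stationary]

lemma IsNormalizedFixedPoint.mul_norm_sub_apply_le {f g : PiLp 2 fun _ : ι => E}
    (hf : IsNormalizedFixedPoint Y f) (hg : IsNormalizedFixedPoint Y g) {T : ℝ} {j : ι}
    (hj : j ∉ badSet Y f (2 * T)) : T * ‖(f - g) j‖ ≤ ‖blockAct Y (f - g) j‖ := by
  have hfield : 2 * T ≤ ‖blockAct Y f j‖ := by simpa [badSet] using hj
  have hstable := mul_norm_sub_le_of_smul_eq (norm_nonneg _) (hf.stationary j) (hg.stationary j)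
    (hg.norm_apply j).le (norm_sub_rev (blockAct Y f j) _ ▸ abs_norm_sub_norm_le _ _)
  rw [← PiLp.sub_apply, ← PiLp.sub_apply, ← map_sub] at hstable
  have := mul_le_mul_of_nonneg_right hfield (norm_nonneg ((f - g) j))
  linarith

lemma IsNormalizedFixedPoint.of_eq_F1 {n : ℕ} {Y : Matrix (Fin n) (Fin n) ℂ} {z : Fin n → ℂ}
    (hz : ∀ j, ‖z j‖ = 1) (hF : z = F1 Y z) :
    IsNormalizedFixedPoint Y (WithLp.toLp 2 z) where
  norm_apply := hz
  stationary j := by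
    rw [blockAct_eq_mulVec]
    by_cases hzero : Y.mulVec z j = 0
    · simp [hzero]
    · have hzj : z j = Y.mulVec z j / (‖Y.mulVec z j‖ : ℂ) := by
        simpa only [F1, ne_eq, hzero, not_false_eq_true, if_true] using congrFun hF j
      have hnorm : (‖Y.mulVec z j‖ : ℂ) ≠ 0 := by simpa using hzero
      exact (mul_comm _ _).trans ((eq_div_iff hnorm).1 hzj)

end NormalizedFixedPoints

section ConjugatedColumns

variable {m n : ℕ}

/-- The entrywise conjugate of `a` as a Euclidean vector. -/
def conjVec (a : Fin m → ℂ) : EuclideanSpace ℂ (Fin m) := WithLp.toLp 2 (star a)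

lemma norm_conjVec (a : Fin m → ℂ) : ‖conjVec a‖ = enorm a := by
  simp [conjVec, EuclideanSpace.norm_eq, enorm]

lemma conjVec_star (c : EuclideanSpace ℂ (Fin m)) : conjVec (star c.ofLp) = c := by
  simp [conjVec]

/-- The conjugated columns of `V`. Conjugation turns `V Yᴴ` into the action of `Y`, so that `Fm`
becomes the same normalization map as `F1`. -/
def conjCols (V : Matrix (Fin m) (Fin n) ℂ) : PiLp 2 fun _ : Fin n => EuclideanSpace ℂ (Fin m) :=
  WithLp.toLp 2 fun j => conjVec (col V j)

lemma norm_conjCols_apply (V : Matrix (Fin m) (Fin n) ℂ) (j : Fin n) :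
    ‖conjCols V j‖ = enorm (col V j) := norm_conjVec _

lemma blockAct_conjCols_apply (Y : Matrix (Fin n) (Fin n) ℂ) (V : Matrix (Fin m) (Fin n) ℂ)
    (j : Fin n) : blockAct Y (conjCols V) j = conjVec (col (V * Yᴴ) j) := by
  ext i
  simp [conjCols, conjVec, col, Matrix.mul_apply, mul_comm]

lemma IsNormalizedFixedPoint.of_eq_Fm {Y : Matrix (Fin n) (Fin n) ℂ}
    {V : Matrix (Fin m) (Fin n) ℂ} (hV : ∀ j, enorm (col V j) = 1) (hF : V = Fm Y V) :
    IsNormalizedFixedPoint Y (conjCols V) where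
  norm_apply j := (norm_conjCols_apply V j).trans (hV j)
  stationary j := by
    rw [blockAct_conjCols_apply, norm_conjVec]
    by_cases hzero : enorm (col (V * Yᴴ) j) = 0
    · have hvec : conjVec (col (V * Yᴴ) j) = 0 := by rwa [← norm_eq_zero, norm_conjVec]
      rw [hzero, hvec, Complex.ofReal_zero, zero_smul]
    · have hcol : col (V * Yᴴ) j ≠ 0 := fun h => hzero (by simp [h, enorm])
      have hentry (i) : V i j = (V * Yᴴ) i j / (enorm (col (V * Yᴴ) j) : ℂ) := by
        simpa only [Fm, Matrix.of_apply, hcol, ne_eq, not_false_eq_true, if_true] using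
          congrFun (congrFun hF i) j
      have hnorm : (enorm (col (V * Yᴴ) j) : ℂ) ≠ 0 := Complex.ofReal_ne_zero.2 hzero
      ext i
      change _ * star (V i j) = star ((V * Yᴴ) i j)
      rw [hentry i, star_div₀, Complex.star_def, Complex.conj_ofReal, mul_div_cancel₀ _ hnorm]

lemma fnorm_sub_vecMulVec_sq (V : Matrix (Fin m) (Fin n) ℂ) (a : Fin m → ℂ) (z : Fin n → ℂ) :
    fnorm (V - Matrix.vecMulVec a (star z)) ^ 2 = ‖conjCols V - outer z (conjVec a)‖ ^ 2 := by
  rw [fnorm, Real.sq_sqrt (by positivity), PiLp.norm_sq_eq_of_L2, Finset.sum_comm]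
  refine Finset.sum_congr rfl fun j _ => ?_
  rw [EuclideanSpace.norm_sq_eq]
  refine Finset.sum_congr rfl fun i _ => ?_
  rw [← Complex.norm_conj]
  simp [conjCols, conjVec, col, Matrix.vecMulVec_apply, mul_comm]

end ConjugatedColumns

section Losses

variable {m n : ℕ} {z zstar : Fin n → ℂ} {V : Matrix (Fin m) (Fin n) ℂ}

lemma enorm_sub_smul (z zstar : Fin n → ℂ) (a : ℂ) :
    enorm (z - a • zstar) = ‖WithLp.toLp 2 z - outer zstar a‖ := by
  simp [enorm, EuclideanSpace.norm_eq, mul_comm]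

lemma sub_norm_correlation_le_loss1 (hn : 0 < n) (hz : ∀ j, ‖z j‖ = 1)
    (hzstar : ∀ j, ‖zstar j‖ = 1) :
    2 * n - 2 * ‖correlation zstar (WithLp.toLp 2 z)‖ ≤ n * loss1 z zstar := by
  rw [mul_comm (n : ℝ) (loss1 z zstar), ← div_le_iff₀ (Nat.cast_pos.2 hn)]
  refine le_csInf ⟨_, 1, norm_one, rfl⟩ ?_
  rintro _ ⟨a, ha, rfl⟩
  rw [enorm_sub_smul]
  gcongr
  simpa using sub_norm_correlation_le_norm_sub_outer_sq (v := WithLp.toLp 2 z) hzstar hz ha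

lemma sub_norm_correlation_le_lossM (hn : 0 < n) (hV : ∀ j, enorm (col V j) = 1)
    (hzstar : ∀ j, ‖zstar j‖ = 1) :
    2 * n - 2 * ‖correlation zstar (conjCols V)‖ ≤ n * lossM V zstar := by
  rw [mul_comm (n : ℝ) (lossM V zstar), ← div_le_iff₀ (Nat.cast_pos.2 hn)]
  refine le_csInf ⟨_, col V ⟨0, hn⟩, hV _, rfl⟩ ?_
  rintro _ ⟨a, ha, rfl⟩
  rw [fnorm_sub_vecMulVec_sq]
  gcongr
  simpa using sub_norm_correlation_le_norm_sub_outer_sq hzstar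
    (fun j => (norm_conjCols_apply V j).trans (hV j)) ((norm_conjVec a).trans ha)

lemma lossM_le_norm_sub_outer_sq (V : Matrix (Fin m) (Fin n) ℂ) (z : Fin n → ℂ)
    {c : EuclideanSpace ℂ (Fin m)} (hc : ‖c‖ = 1) :
    lossM V z ≤ ‖conjCols V - outer z c‖ ^ 2 / n := by
  have hbdd : BddBelow {r : ℝ | ∃ a : Fin m → ℂ, enorm a = 1 ∧
      r = fnorm (V - Matrix.vecMulVec a (star z)) ^ 2 / n} := by
    refine ⟨0, ?_⟩
    rintro _ ⟨a, -, rfl⟩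
    positivity
  refine csInf_le hbdd ⟨star c.ofLp, ?_, ?_⟩
  · rw [← norm_conjVec, conjVec_star, hc]
  · rw [fnorm_sub_vecMulVec_sq, conjVec_star]

end Losses

section Comparison

variable {E : Type*} [NormedAddCommGroup E] [InnerProductSpace ℂ E] [FiniteDimensional ℂ E]
  {n : ℕ} {zstar : Fin n → ℂ} {A : Matrix (Fin n) (Fin n) ℂ}

lemma IsNormalizedFixedPoint.norm_sub_sq_le_card_badSet {f g : PiLp 2 fun _ : Fin n => E}
    (hf : IsNormalizedFixedPoint (spiked zstar A) f)
    (hg : IsNormalizedFixedPoint (spiked zstar A) g) (hzstar : ∀ j, ‖zstar j‖ = 1)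
    {c : E} (hc : ‖c‖ = 1) {s s' ε T : ℝ} (hs : correlation zstar f = (s : ℂ) • c)
    (hs' : correlation zstar g = (s' : ℂ) • c) (hε : 0 ≤ ε) (hT : 0 < T)
    (hsε : 2 * n - 2 * s ≤ n * ε ^ 2) (hsε' : 2 * n - 2 * s' ≤ n * ε ^ 2)
    (hεT : 11 * (ε * n + opNorm A) ≤ 4 * T) :
    ‖f - g‖ ^ 2 ≤ 10 * (badSet (spiked zstar A) f (2 * T)).card := by
  set B := badSet (spiked zstar A) f (2 * T)
  have hr : (ε * √n) ^ 2 = n * ε ^ 2 := by rw [mul_pow, Real.sq_sqrt n.cast_nonneg, mul_comm]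
  have hcorr : ‖correlation zstar (f - g)‖ ≤ ε * √n * ‖f - g‖ :=
    norm_correlation_sub_le hzstar hf.norm_apply hg.norm_apply hc hs hs' (by positivity)
      (by rwa [Fintype.card_fin, hr]) (by rwa [Fintype.card_fin, hr])
  have hsub_le (j) : ‖(f - g) j‖ ≤ 2 := by
    rw [PiLp.sub_apply]
    exact (norm_sub_le _ _).trans (by rw [hf.norm_apply, hg.norm_apply]; norm_num)
  have hoff : ∀ j ∉ B, T * ‖(f - g) j‖ ≤ ε * √n * ‖f - g‖ + ‖blockAct A (f - g) j‖ :=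
    fun j hj => (hf.mul_norm_sub_apply_le hg hj).trans <|
      (norm_blockAct_spiked_apply_le hzstar A _ j).trans (by gcongr)
  have hnorm := mul_norm_le_of_norm_apply_le_off hT.le (by positivity) (fun j _ => hsub_le j) hoff
  have hlin : 7 * ‖f - g‖ ≤ 22 * √B.card := by
    have hsqrt : ε * √n * ‖f - g‖ * √n = ε * n * ‖f - g‖ := by
      rw [mul_right_comm, mul_assoc ε, Real.mul_self_sqrt n.cast_nonneg]
    refine le_of_mul_le_mul_left ?_ hT
    nlinarith [mul_le_mul_of_nonneg_right hεT (norm_nonneg (f - g))]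
  have hsq := pow_le_pow_left₀ (by positivity) hlin 2
  rw [mul_pow, mul_pow, Real.sq_sqrt (Nat.cast_nonneg _)] at hsq
  have : (0 : ℝ) ≤ B.card := Nat.cast_nonneg _
  linarith

end Comparison

section Counting

variable {n : ℕ} {zstar : Fin n → ℂ} {A : Matrix (Fin n) (Fin n) ℂ} {s s₀ T h : ℝ}
  {z ζ : EuclideanSpace ℂ (Fin n)}

lemma mul_norm_sub_truncated_le (hzstar : ∀ j, ‖zstar j‖ = 1)
    (hz : IsNormalizedFixedPoint (spiked zstar A) z) (hs : correlation zstar z = s) (hT : 0 < T)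
    (hζ : IsTruncatedFixedPoint zstar A s₀ (2 * T) ζ) (hh : |s - s₀| ≤ h) :
    T * ‖z - ζ‖ ≤
      2 * T * √(badSet (spiked zstar A) z (2 * T)).card + h * √n + opNorm A * ‖z - ζ‖ := by
  refine mul_norm_le_of_norm_apply_le_off hT.le ((abs_nonneg _).trans hh) (fun j _ => ?_)
    fun j hj => ?_
  · rw [PiLp.sub_apply]
    exact (norm_sub_le _ _).trans (by linarith [hz.norm_apply j, hζ.norm_apply_le_one j])
  · have hfield : blockAct (spiked zstar A) z j - (outer zstar (s₀ : ℂ) + blockAct A ζ) j =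
        zstar j * ((s - s₀ : ℝ) : ℂ) + blockAct A (z - ζ) j := by
      simp only [blockAct_spiked, hs, map_sub, PiLp.add_apply, PiLp.sub_apply, outer_apply,
        smul_eq_mul]
      push_cast
      ring
    have hgfun := mul_norm_sub_gfun_le (mul_pos two_pos hT)
      ((outer zstar (s₀ : ℂ) + blockAct A ζ) j) (hz.stationary j) (by simpa [badSet] using hj)
    rw [← hζ j, hfield, ← PiLp.sub_apply] at hgfun
    have htri := norm_add_le (zstar j * ((s - s₀ : ℝ) : ℂ)) (blockAct A (z - ζ) j)
    rw [norm_mul, hzstar, one_mul, Complex.norm_real, Real.norm_eq_abs] at htri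
    linarith

lemma mul_card_large_noise_le (hzstar : ∀ j, ‖zstar j‖ = 1)
    (hz : IsNormalizedFixedPoint (spiked zstar A) z) (hs : correlation zstar z = s) (hT : 0 < T)
    (hζ : IsTruncatedFixedPoint zstar A s₀ (2 * T) ζ) (hh : |s - s₀| ≤ h)
    (hAT : 11 * opNorm A ≤ 4 * T) :
    49 * (Finset.univ.filter fun j => 2 * T < ‖blockAct A (z - ζ) j‖).card ≤
      32 * (badSet (spiked zstar A) z (2 * T)).card + 8 * (h ^ 2 * n / T ^ 2) := by
  set B := badSet (spiked zstar A) z (2 * T)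
  set C := Finset.univ.filter fun j => 2 * T < ‖blockAct A (z - ζ) j‖ with hC
  have hdist := mul_norm_sub_truncated_le hzstar hz hs hT hζ hh
  have hnoise : 7 * ‖blockAct A (z - ζ)‖ ≤ 4 * (2 * T * √B.card + h * √n) := by
    nlinarith [norm_blockAct_le A (z - ζ),
      mul_le_mul_of_nonneg_right hAT (norm_nonneg (z - ζ))]
  have hcard : C.card * (2 * T) ^ 2 ≤ ‖blockAct A (z - ζ)‖ ^ 2 :=
    card_mul_sq_le_norm_sq (by positivity) fun j hj => by
      simp only [hC, Finset.mem_filter] at hj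
      exact hj.2.le
  have hsq : 49 * ‖blockAct A (z - ζ)‖ ^ 2 ≤ 32 * (4 * T ^ 2 * B.card + h ^ 2 * n) := by
    calc 49 * ‖blockAct A (z - ζ)‖ ^ 2 = (7 * ‖blockAct A (z - ζ)‖) ^ 2 := by ring
      _ ≤ (4 * (2 * T * √B.card + h * √n)) ^ 2 := pow_le_pow_left₀ (by positivity) hnoise 2
      _ = 16 * (2 * T * √B.card + h * √n) ^ 2 := by ring
      _ ≤ 16 * (2 * ((2 * T * √B.card) ^ 2 + (h * √n) ^ 2)) := by
          gcongr
          exact add_sq_le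
      _ = 32 * (4 * T ^ 2 * B.card + h ^ 2 * n) := by
          rw [mul_pow, mul_pow h, Real.sq_sqrt n.cast_nonneg, Real.sq_sqrt (Nat.cast_nonneg _)]
          ring
  have hT2 : 0 < T ^ 2 := by positivity
  rw [← sub_le_iff_le_add', ← mul_div_assoc, le_div_iff₀ hT2]
  linarith

lemma badSet_subset_of_leaveOneOut (hzstar : ∀ j, ‖zstar j‖ = 1)
    (hs : correlation zstar z = s) (hT : 0 < T)
    (hζ : IsTruncatedFixedPoint zstar A s₀ (2 * T) ζ) (hAT : 2 * opNorm A ≤ T)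
    {ζlo : Fin n → EuclideanSpace ℂ (Fin n)}
    (hζlo : ∀ j, IsTruncatedFixedPoint zstar (Wminus A j) s₀ (2 * T) (ζlo j)) :
    badSet (spiked zstar A) z (2 * T) ⊆
      (Finset.univ.filter fun j => 2 * T < ‖blockAct A (z - ζ) j‖) ∪
        Finset.univ.filter fun j => s - 4 * T - 3 * opNorm A < ‖blockAct A (ζlo j) j‖ := by
  intro j hj
  simp only [Finset.mem_union, Finset.mem_filter, Finset.mem_univ, true_and]
  refine or_iff_not_imp_left.2 fun hsmall => ?_
  have hfield : ‖blockAct (spiked zstar A) z j‖ < 2 * T := by simpa [badSet] using hj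
  have hsignal : s ≤ ‖blockAct (spiked zstar A) z j‖ + ‖blockAct A z j‖ := by
    have hnorm : ‖blockAct (spiked zstar A) z j - blockAct A z j‖ = |s| := by
      rw [blockAct_spiked, PiLp.add_apply, add_sub_cancel_right, hs, outer_apply, norm_smul, hzstar,
        one_mul, Complex.norm_real, Real.norm_eq_abs]
    exact (le_abs_self s).trans (hnorm ▸ norm_sub_le _ _)
  have hleaveOneOut := norm_blockAct_sub_leaveOneOut_le hT hAT hζ (hζlo j)
  have hsplit : blockAct A z j =
      blockAct A (z - ζ) j + blockAct A (ζ - ζlo j) j + blockAct A (ζlo j) j := by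
    simp only [map_sub, PiLp.sub_apply]
    ring
  have htri := hsplit ▸ norm_add₃_le
    (a := blockAct A (z - ζ) j) (b := blockAct A (ζ - ζlo j) j) (c := blockAct A (ζlo j) j)
  linarith [not_lt.1 hsmall]

lemma card_badSet_le_of_leaveOneOut (hzstar : ∀ j, ‖zstar j‖ = 1)
    (hz : IsNormalizedFixedPoint (spiked zstar A) z) (hs : correlation zstar z = s) (hT : 0 < T)
    (hh : |s - s₀| ≤ h) (hAT : 11 * opNorm A ≤ 4 * T) {ζlo : Fin n → EuclideanSpace ℂ (Fin n)}
    (hζlo : ∀ j, IsTruncatedFixedPoint zstar (Wminus A j) s₀ (2 * T) (ζlo j)) :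
    17 * (badSet (spiked zstar A) z (2 * T)).card ≤
      49 * (Finset.univ.filter fun j =>
        s - 4 * T - 3 * opNorm A < ‖blockAct A (ζlo j) j‖).card + 8 * (h ^ 2 * n / T ^ 2) := by
  obtain ⟨ζ, hζ⟩ := exists_isTruncatedFixedPoint zstar A s₀ (t := 2 * T) (by linarith)
  have hlarge := mul_card_large_noise_le hzstar hz hs hT hζ hh hAT
  have hcover := (Finset.card_le_card <|
    badSet_subset_of_leaveOneOut hzstar hs hT hζ (by linarith) hζlo).trans
      (Finset.card_union_le _ _)
  have hcover' := (Nat.cast_le (α := ℝ)).2 hcover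
  push_cast at hcover'
  linarith

end Counting

section Alignment

variable {m n : ℕ} {zstar zhat : Fin n → ℂ} {A : Matrix (Fin n) (Fin n) ℂ}

lemma exists_norm_eq_one_and_eq_norm_smul {E : Type*} [NormedAddCommGroup E] [NormedSpace ℂ E]
    {x : E} (hx : x ≠ 0) : ∃ c : E, ‖c‖ = 1 ∧ x = (‖x‖ : ℂ) • c := by
  have hnorm : (‖x‖ : ℂ) ≠ 0 := Complex.ofReal_ne_zero.2 (norm_ne_zero_iff.2 hx)
  exact ⟨(‖x‖ : ℂ)⁻¹ • x, norm_smul_inv_norm hx, (smul_inv_smul₀ hnorm x).symm⟩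

lemma exists_phase_correlation_eq_norm {z : EuclideanSpace ℂ (Fin n)}
    (hcorr : correlation zstar z ≠ 0) :
    ∃ w : ℂ, ‖w‖ = 1 ∧ correlation zstar (outer z w) = (‖correlation zstar z‖ : ℂ) := by
  obtain ⟨w, hw, hphase⟩ := exists_norm_eq_one_and_eq_norm_smul hcorr
  refine ⟨starRingEnd ℂ w, (Complex.norm_conj w).trans hw, ?_⟩
  rw [correlation_outer]
  nth_rw 1 [hphase]
  rw [smul_assoc, smul_eq_mul w, Complex.mul_conj', hw]
  simp

lemma lossM_le_card_badSet (hn : 0 < n) (hzstar : ∀ j, ‖zstar j‖ = 1)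
    {ε T : ℝ} (hε : 0 ≤ ε) (hε1 : ε ≤ 1) (hT : 0 < T) (hεT : 11 * (ε * n + opNorm A) ≤ 4 * T)
    (hzhat : ∀ j, ‖zhat j‖ = 1) (hzhatF : zhat = F1 (spiked zstar A) zhat)
    (hzhat_loss : loss1 zhat zstar ≤ ε ^ 2) {V : Matrix (Fin m) (Fin n) ℂ}
    (hV : ∀ j, enorm (col V j) = 1) (hVF : V = Fm (spiked zstar A) V)
    (hV_loss : lossM V zstar ≤ ε ^ 2) :
    ∃ (z : EuclideanSpace ℂ (Fin n)) (s : ℝ), IsNormalizedFixedPoint (spiked zstar A) z ∧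
      correlation zstar z = s ∧ n - n * ε ≤ s ∧ s ≤ n ∧
      lossM V zhat ≤ 10 * (badSet (spiked zstar A) z (2 * T)).card / n := by
  have hn' : (0 : ℝ) < n := Nat.cast_pos.2 hn
  have hnε0 : 0 ≤ n * ε := by positivity
  have hnε : n * ε ^ 2 ≤ n * ε := by
    gcongr
    exact pow_le_of_le_one hε hε1 two_ne_zero
  have hnε1 : n * ε ≤ n := mul_le_of_le_one_right hn'.le hε1
  have hs : 2 * n - 2 * ‖correlation zstar (WithLp.toLp 2 zhat)‖ ≤ n * ε ^ 2 :=
    (sub_norm_correlation_le_loss1 hn hzhat hzstar).trans (by gcongr)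
  have hs' : 2 * n - 2 * ‖correlation zstar (conjCols V)‖ ≤ n * ε ^ 2 :=
    (sub_norm_correlation_le_lossM hn hV hzstar).trans (by gcongr)
  obtain ⟨w, hw, hcorr⟩ := exists_phase_correlation_eq_norm
    (z := WithLp.toLp 2 zhat) (zstar := zstar) (norm_pos_iff.1 (by linarith))
  obtain ⟨c, hc, hcorr'⟩ := exists_norm_eq_one_and_eq_norm_smul
    (x := correlation zstar (conjCols V)) (norm_pos_iff.1 (by linarith))
  have hz : IsNormalizedFixedPoint (spiked zstar A) (outer zhat w) :=
    (IsNormalizedFixedPoint.of_eq_F1 hzhat hzhatF).outer_of_norm_eq_one hw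
  have hcompare := (hz.outer_of_norm_eq_one hc).norm_sub_sq_le_card_badSet
    (.of_eq_Fm hV hVF) hzstar hc (by rw [correlation_outer, hcorr]) hcorr' hε hT hs hs' hεT
  rw [badSet_outer _ hc, outer_outer, norm_sub_rev] at hcompare
  refine ⟨outer zhat w, _, hz, hcorr, by linarith, ?_, ?_⟩
  · simpa using norm_correlation_le (v := WithLp.toLp 2 zhat) hzstar hzhat
  · refine (lossM_le_norm_sub_outer_sq V zhat (c := w • c) ?_).trans (by gcongr)
    rw [norm_smul, hw, hc, one_mul]

end Alignment

section Discretization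

lemma exists_grid_point {n ε h s : ℝ} (hh : 0 < h) (hs : n - n * ε ≤ s) (hsn : s ≤ n) :
    ∃ k ≤ ⌈n * ε / h⌉₊, |s - (n - k * h)| ≤ h := by
  have hnonneg : 0 ≤ (n - s) / h := div_nonneg (sub_nonneg.2 hsn) hh.le
  refine ⟨⌊(n - s) / h⌋₊, ?_, abs_le.2 ⟨?_, ?_⟩⟩
  · refine (Nat.floor_le_ceil _).trans (Nat.ceil_le_ceil ?_)
    gcongr
    linarith
  · have := (div_lt_iff₀ hh).1 (Nat.lt_floor_add_one ((n - s) / h))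
    linarith
  · have := (le_div_iff₀ hh).1 (Nat.floor_le hnonneg)
    linarith

lemma ten_mul_le_of_seventeen_mul_le {a b : ℕ} {q : ℝ} (hab : (17 : ℝ) * b ≤ 49 * a + 8 * q) :
    (10 : ℝ) * b ≤ 72 * a + 72 * q * ind (1 < q) := by
  by_cases hq : 1 < q
  · rw [ind, if_pos hq]
    linarith
  · rw [ind, if_neg hq]
    rcases b.eq_zero_or_pos with rfl | hb
    · simp
    -- Integrality: `8 q ≤ 8 b` as soon as `b ≠ 0`.
    · have : (1 : ℝ) ≤ b := Nat.one_le_cast.2 hb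
      linarith

lemma one_lt_sq_mul_div_sq_iff {h δ n : ℝ} (hh : 0 ≤ h) (hδ : 0 < δ) (hn : 0 < n) :
    1 < h ^ 2 * n / (δ * n) ^ 2 ↔ δ * √n < h := by
  have hq : h ^ 2 * n / (δ * n) ^ 2 = (h / (δ * √n)) ^ 2 := by
    rw [div_pow, mul_pow, mul_pow, Real.sq_sqrt hn.le]
    field_simp
  rw [hq, one_lt_sq_iff₀ (by positivity), one_lt_div (by positivity)]

lemma sum_ind_eq_card {ι : Type*} [Fintype ι] (p : ι → Prop) :
    ∑ j, ind (p j) = (Finset.univ.filter p).card := by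
  simp [ind]

lemma eleven_mul_le_of_two_sqrt_two_mul_le {n ε ω δ : ℝ} (hn : 0 < n) (hε : 0 ≤ ε) (hω : 0 ≤ ω)
    (hδ : 2 * √2 * (6 * ε + ω / n) ≤ δ) : 11 * (ε * n + ω) ≤ 4 * (δ * n) := by
  have hsqrt : 11 ≤ 8 * √2 := by
    nlinarith [Real.sq_sqrt (zero_le_two (α := ℝ)), Real.sqrt_nonneg 2]
  calc 11 * (ε * n + ω) ≤ 8 * √2 * (6 * (ε * n) + ω) := by
        refine mul_le_mul hsqrt ?_ (by positivity) (by positivity)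
        linarith [mul_nonneg hε hn.le]
    _ = 4 * (2 * √2 * (6 * ε + ω / n) * n) := by
        field_simp
        ring
    _ ≤ 4 * (δ * n) := by gcongr

lemma exists_lossM_le_card_leaveOneOut {m n : ℕ} {zstar zhat : Fin n → ℂ}
    {A : Matrix (Fin n) (Fin n) ℂ} {V : Matrix (Fin m) (Fin n) ℂ} {ε T h : ℝ} (hn : 0 < n)
    (hzstar : ∀ j, ‖zstar j‖ = 1) (hε : 0 ≤ ε) (hε1 : ε ≤ 1) (hh : 0 < h) (hT : 0 < T)
    (hεT : 11 * (ε * n + opNorm A) ≤ 4 * T)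
    (hzhat : ∀ j, ‖zhat j‖ = 1) (hzhatF : zhat = F1 (spiked zstar A) zhat)
    (hzhat_loss : loss1 zhat zstar ≤ ε ^ 2)
    (hV : ∀ j, enorm (col V j) = 1) (hVF : V = Fm (spiked zstar A) V)
    (hV_loss : lossM V zstar ≤ ε ^ 2) {ζlo : ℕ → Fin n → EuclideanSpace ℂ (Fin n)}
    (hζlo : ∀ k ≤ ⌈n * ε / h⌉₊, ∀ j,
      IsTruncatedFixedPoint zstar (Wminus A j) (n - k * h) (2 * T) (ζlo k j)) :
    ∃ k ≤ ⌈n * ε / h⌉₊, lossM V zhat ≤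
      (72 * (Finset.univ.filter fun j =>
          n - n * ε - 4 * T - 3 * opNorm A < ‖blockAct A (ζlo k j) j‖).card +
        72 * (h ^ 2 * n / T ^ 2) * ind (1 < h ^ 2 * n / T ^ 2)) / n := by
  obtain ⟨z, s, hz, hs, hs_ge, hs_le, hloss⟩ :=
    lossM_le_card_badSet hn hzstar hε hε1 hT hεT hzhat hzhatF hzhat_loss hV hVF hV_loss
  obtain ⟨k, hk, hgrid⟩ := exists_grid_point hh hs_ge hs_le
  have hcount := ten_mul_le_of_seventeen_mul_le <|
    card_badSet_le_of_leaveOneOut hzstar hz hs hT hgrid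
      (by linarith [mul_nonneg hε (Nat.cast_nonneg (α := ℝ) n)]) (hζlo k hk)
  refine ⟨k, hk, hloss.trans ?_⟩
  gcongr
  refine hcount.trans ?_
  gcongr

lemma card_leaveOneOut_le_sum_ind {n : ℕ} (hn : 0 < n) {σ : ℝ} (hσ : 0 ≤ σ)
    (W : Matrix (Fin n) (Fin n) ℂ) (zlo : Fin n → Fin n → ℂ) (ε δ : ℝ) {h : ℝ} (hh : 0 ≤ h) :
    ((Finset.univ.filter fun j => n - n * ε - 4 * (δ * n) - 3 * opNorm ((σ : ℂ) • W) <
        ‖blockAct ((σ : ℂ) • W) (WithLp.toLp 2 (zlo j)) j‖).card : ℝ) ≤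
      ∑ j, ind (σ * ‖W.mulVec (zlo j) j‖ >
        (1 - ε - 4 * δ - 3 * σ * opNorm W / n) * n - h) := by
  have hn' : (n : ℝ) ≠ 0 := Nat.cast_ne_zero.2 hn.ne'
  have hthreshold : (1 - ε - 4 * δ - 3 * σ * opNorm W / n) * n =
      n - n * ε - 4 * (δ * n) - 3 * (σ * opNorm W) := by
    field_simp
  have hentry (j) : ‖blockAct ((σ : ℂ) • W) (WithLp.toLp 2 (zlo j)) j‖ =
      σ * ‖W.mulVec (zlo j) j‖ := by
    rw [blockAct_eq_mulVec, Matrix.smul_mulVec, Pi.smul_apply, norm_smul,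
      Complex.norm_of_nonneg hσ]
  rw [sum_ind_eq_card, Nat.cast_le, hthreshold, opNorm_real_smul hσ]
  refine Finset.card_le_card (Finset.monotone_filter_right _ fun j _ hj => ?_)
  rw [hentry] at hj
  linarith

end Discretization

theorem stmt2_general {n m : ℕ} (hn : 1 ≤ n)
    (zstar : Fin n → ℂ) (hzstar : ∀ j, ‖zstar j‖ = 1)
    (σ : ℝ) (hσ : 0 ≤ σ) (W : Matrix (Fin n) (Fin n) ℂ)
    (ε : ℝ) (hε : 0 < ε) (hε1 : ε ≤ 1) (h : ℝ) (hh : 0 < h)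
    (δ : ℝ) (hδ : 2 * √2 * (6 * ε + σ * opNorm W / n) ≤ δ)
    (zhat : Fin n → ℂ) (hzhat : ∀ j, ‖zhat j‖ = 1)
    (hzhatF : zhat = F1 (spiked zstar ((σ : ℂ) • W)) zhat) (hzhat_loss : loss1 zhat zstar ≤ ε ^ 2)
    (V : Matrix (Fin m) (Fin n) ℂ) (hV : ∀ j, enorm (col V j) = 1)
    (hVF : V = Fm (spiked zstar ((σ : ℂ) • W)) V) (hV_loss : lossM V zstar ≤ ε ^ 2)
    (zlo : ℕ → Fin n → (Fin n → ℂ))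
    (hzlo : ∀ k ≤ ⌈n * ε / h⌉₊, ∀ j : Fin n,
      zlo k j = G zstar σ (Wminus W j) (zlo k j) ((n - k * h : ℝ) : ℂ) (2 * δ * n)) :
    lossM V zhat ≤
      72 * (∑ k ∈ Finset.range (⌈n * ε / h⌉₊ + 1),
        (1 / (n : ℝ)) * ∑ j : Fin n, ind (σ * ‖W.mulVec (zlo k j) j‖ >
          (1 - ε - 4 * δ - 3 * σ * opNorm W / n) * n - h)) +
      (72 * h ^ 2 / (δ ^ 2 * (n : ℝ) ^ 2)) * ind (h > δ * √n) := by
  set excess : ℕ → ℝ := fun k => ∑ j : Fin n, ind (σ * ‖W.mulVec (zlo k j) j‖ >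
    (1 - ε - 4 * δ - 3 * σ * opNorm W / n) * n - h) with hexcess
  have hexcess_nonneg (k) : 0 ≤ excess k := by simp only [hexcess, sum_ind_eq_card, Nat.cast_nonneg]
  have hn' : (0 : ℝ) < n := Nat.cast_pos.2 hn
  have hω : 0 ≤ σ * opNorm W := mul_nonneg hσ (opNorm_nonneg W)
  have hδ0 : 0 < δ := lt_of_lt_of_le (by positivity) hδ
  obtain ⟨k, hk, hloss⟩ := exists_lossM_le_card_leaveOneOut (T := δ * n)
    (ζlo := fun k j => WithLp.toLp 2 (zlo k j)) hn hzstar hε.le hε1 hh (by positivity)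
    (by simpa only [opNorm_real_smul hσ] using
      eleven_mul_le_of_two_sqrt_two_mul_le hn' hε.le hω hδ)
    hzhat hzhatF hzhat_loss hV hVF hV_loss fun k hk j => by
      rw [← smul_Wminus, ← mul_assoc]
      exact isTruncatedFixedPoint_of_eq_G (hzlo k hk j)
  calc lossM V zhat ≤ (72 * excess k + 72 * (h ^ 2 * n / (δ * n) ^ 2) * ind (h > δ * √n)) / n := by
        rw [one_lt_sq_mul_div_sq_iff hh.le hδ0 hn'] at hloss
        exact hloss.trans (by gcongr; exact card_leaveOneOut_le_sum_ind hn hσ W (zlo k) ε δ hh.le)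
    _ = 72 * (1 / n * excess k) + 72 * h ^ 2 / (δ ^ 2 * (n : ℝ) ^ 2) * ind (h > δ * √n) := by
        field_simp
    _ ≤ _ := by
        gcongr
        exact Finset.single_le_sum (f := fun k => 1 / (n : ℝ) * excess k)
          (fun i _ => mul_nonneg (by positivity) (hexcess_nonneg i))
          (Finset.mem_range_succ_iff.2 hk)

theorem stmt2 {n m : ℕ} (hn : 1 ≤ n) (hm : 2 ≤ m)
    (zstar : Fin n → ℂ) (hzstar : ∀ j, ‖zstar j‖ = 1)
    (σ : ℝ) (hσ : 0 < σ) (W : Matrix (Fin n) (Fin n) ℂ) (hW : W.IsHermitian)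
    (Y : Matrix (Fin n) (Fin n) ℂ)
    (hY : Y = Matrix.vecMulVec zstar (star zstar) + (σ : ℂ) • W)
    (ε : ℝ) (hε : 0 < ε ∧ ε < 1 / 2) (h : ℝ) (hh : 0 < h)
    (δ : ℝ) (hδ : 2 * Real.sqrt 2 * (6 * ε + σ * opNorm W / n) ≤ δ)
    (zhat : Fin n → ℂ) (hzhat1 : ∀ j, ‖zhat j‖ = 1)
    (hzhat2 : zhat = F1 Y zhat) (hzhat3 : loss1 zhat zstar ≤ ε ^ 2)
    (Vhat : Matrix (Fin m) (Fin n) ℂ) (hVhat1 : ∀ j, enorm (col Vhat j) = 1)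
    (hVhat2 : Vhat = Fm Y Vhat) (hVhat3 : lossM Vhat zstar ≤ ε ^ 2)
    (zlo : ℕ → Fin n → (Fin n → ℂ))
    (hzlo : ∀ k ≤ Nat.ceil ((n : ℝ) * ε / h), ∀ j : Fin n,
      (∀ i, ‖zlo k j i‖ ≤ 1) ∧
      zlo k j = G zstar σ (Wminus W j) (zlo k j) (((n : ℝ) - (k : ℝ) * h : ℝ) : ℂ)
        (2 * δ * n)) :
    lossM Vhat zhat ≤
      72 * (∑ k ∈ Finset.range (Nat.ceil ((n : ℝ) * ε / h) + 1),
        (1 / (n : ℝ)) * ∑ j : Fin n, ind (σ * ‖W.mulVec (zlo k j) j‖ >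
          (1 - ε - 4 * δ - 3 * σ * opNorm W / n) * n - h)) +
      (72 * h ^ 2 / (δ ^ 2 * (n : ℝ) ^ 2)) * ind (h > δ * Real.sqrt n) := by
  subst hY
  exact stmt2_general hn zstar hzstar σ hσ.le W ε hε.1 (by linarith [hε.2]) h hh δ hδ zhat hzhat1
    hzhat2 hzhat3 Vhat hVhat1 hVhat2 hVhat3 zlo fun k hk j => (hzlo k hk j).2

end PhaseSync
end
end

section
/- Let s, s' ∈ ℂ and let t > 0 with t ≥ 2σ‖W‖. Let z ∈ ℂ_{≤1}^n be the fixed point of G(·, s, t) and z' ∈ ℂ_{≤1}^n the fixed point of G(·, s', t). Then ‖z − z'‖² ≤ 4n·t^{−2}·|s − s'|² and ‖(z* s + σWz) − (z* s' + σWz')‖² ≤ 4n·|s − s'|². -/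
open scoped Classical
open Matrix

noncomputable section

namespace PhaseSync

/-!
For `t > 0`, `t • g_t` is the metric projection of `ℂ` onto the closed ball of radius `t`, hence
nonexpansive, so `t‖z - z'‖ ≤ ‖u - u'‖` where `u = z* s + σ W z` and `u' = z* s' + σ W z'`.
On the other hand `u - u' = (s - s') z* + σ W (z - z')`, and `|σ|‖W‖ ≤ t / 2` bounds the last term
by `(t / 2)‖z - z'‖ ≤ ‖u - u'‖ / 2`, which is absorbed on the left to give
`‖u - u'‖ ≤ 2 |s - s'| ‖z*‖`.
-/

section TruncNormalize

open scoped InnerProductSpace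

variable {E : Type*} [NormedAddCommGroup E] [InnerProductSpace ℝ E]

/-- The truncated normalization `x / max(‖x‖, t)`: the extension of `gfun t` from `ℂ` to real
inner product spaces. -/
def truncNormalize (t : ℝ) (x : E) : E := (max ‖x‖ t)⁻¹ • x

lemma gfun_eq_truncNormalize (t : ℝ) (x : ℂ) : gfun t x = truncNormalize t x := by
  rw [gfun, truncNormalize, Complex.real_smul, Complex.ofReal_inv, div_eq_inv_mul]

lemma norm_truncNormalize (t : ℝ) (x : E) : ‖truncNormalize t x‖ = ‖x‖ / max ‖x‖ t := by
  rw [truncNormalize, norm_smul, norm_inv, div_eq_inv_mul,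
    Real.norm_of_nonneg (le_max_of_le_left (norm_nonneg x))]

lemma norm_truncNormalize_le_one (t : ℝ) (x : E) : ‖truncNormalize t x‖ ≤ 1 := by
  rw [norm_truncNormalize]
  exact div_le_one_of_le₀ (le_max_left _ _) (le_max_of_le_left (norm_nonneg x))

lemma max_smul_truncNormalize (t : ℝ) (x : E) : max ‖x‖ t • truncNormalize t x = x := by
  rcases eq_or_ne x 0 with rfl | hx
  · simp [truncNormalize]
  · exact smul_inv_smul₀ (lt_max_of_lt_left (norm_pos_iff.2 hx)).ne' x

lemma real_inner_self_sub_nonneg {u w : E} (h : ‖w‖ ≤ ‖u‖) : 0 ≤ ⟪u, u - w⟫_ℝ := by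
  rw [inner_sub_right, real_inner_self_eq_norm_mul_norm, sub_nonneg]
  exact (real_inner_le_norm u w).trans (mul_le_mul_of_nonneg_left h (norm_nonneg u))

/-- For `0 < t` this is the variational inequality characterizing `t • truncNormalize t x` as the
point of the closed ball of radius `t` nearest to `x`. -/
lemma real_inner_sub_smul_truncNormalize_nonneg (t : ℝ) (x : E) {w : E} (hw : ‖w‖ ≤ 1) :
    0 ≤ ⟪x - t • truncNormalize t x, truncNormalize t x - w⟫_ℝ := by
  rcases eq_or_ne x 0 with rfl | hx
  · simp [truncNormalize]
  have residual_eq : x - t • truncNormalize t x = (max ‖x‖ t - t) • truncNormalize t x := by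
    rw [sub_smul, max_smul_truncNormalize]
  rw [residual_eq, real_inner_smul_left]
  rcases le_total ‖x‖ t with hxt | htx
  · rw [max_eq_right hxt, sub_self, zero_mul]
  · have norm_eq_one : ‖truncNormalize t x‖ = 1 := by
      rw [norm_truncNormalize, max_eq_left htx, div_self (norm_ne_zero_iff.2 hx)]
    exact mul_nonneg (sub_nonneg.2 (le_max_right _ _))
      (real_inner_self_sub_nonneg (hw.trans_eq norm_eq_one.symm))

lemma mul_norm_truncNormalize_sub_le (t : ℝ) (x y : E) :
    t * ‖truncNormalize t x - truncNormalize t y‖ ≤ ‖x - y‖ := by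
  set u := truncNormalize t x
  set v := truncNormalize t y
  have at_x : 0 ≤ ⟪x - t • u, u - v⟫_ℝ :=
    real_inner_sub_smul_truncNormalize_nonneg t x (norm_truncNormalize_le_one t y)
  have at_y : 0 ≤ ⟪y - t • v, v - u⟫_ℝ :=
    real_inner_sub_smul_truncNormalize_nonneg t y (norm_truncNormalize_le_one t x)
  have sum_eq : ⟪x - t • u, u - v⟫_ℝ + ⟪y - t • v, v - u⟫_ℝ =
      ⟪x - y, u - v⟫_ℝ - t * ‖u - v‖ ^ 2 := by
    rw [← neg_sub u v, inner_neg_right, ← sub_eq_add_neg, ← inner_sub_left,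
      sub_sub_sub_comm, ← smul_sub, inner_sub_left, real_inner_smul_left,
      real_inner_self_eq_norm_sq]
  rcases (norm_nonneg (u - v)).eq_or_lt with huv | huv
  · rw [← huv, mul_zero]
    exact norm_nonneg _
  · refine le_of_mul_le_mul_right ?_ huv
    calc t * ‖u - v‖ * ‖u - v‖ ≤ ⟪x - y, u - v⟫_ℝ := by linarith
      _ ≤ ‖x - y‖ * ‖u - v‖ := real_inner_le_norm _ _

end TruncNormalize

lemma mul_norm_gfun_sub_le (t : ℝ) (x y : ℂ) : t * ‖gfun t x - gfun t y‖ ≤ ‖x - y‖ := by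
  simpa only [gfun_eq_truncNormalize] using mul_norm_truncNormalize_sub_le t x y

lemma norm_add_apply_le_two_mul {𝕜 E F : Type*} [NontriviallyNormedField 𝕜]
    [SeminormedAddCommGroup E] [NormedSpace 𝕜 E] [SeminormedAddCommGroup F] [NormedSpace 𝕜 F]
    {A : E →L[𝕜] F} {t : ℝ} (hA : 2 * ‖A‖ ≤ t) {b : F} {v : E} (hv : t * ‖v‖ ≤ ‖b + A v‖) :
    ‖b + A v‖ ≤ 2 * ‖b‖ := by
  have triangle : ‖b + A v‖ ≤ ‖b‖ + ‖A‖ * ‖v‖ := norm_add_le_of_le le_rfl (A.le_opNorm v)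
  have absorb : 2 * ‖A‖ * ‖v‖ ≤ ‖b + A v‖ :=
    (mul_le_mul_of_nonneg_right hA (norm_nonneg v)).trans hv
  linarith

section Enorm

variable {k : ℕ}

lemma enorm_eq_norm_toLp (v : Fin k → ℂ) : enorm v = ‖WithLp.toLp 2 v‖ :=
  (EuclideanSpace.norm_eq _).symm

lemma enorm_nonneg (v : Fin k → ℂ) : 0 ≤ enorm v :=
  Real.sqrt_nonneg _

lemma enorm_smul (c : ℂ) (v : Fin k → ℂ) : enorm (c • v) = ‖c‖ * enorm v := by
  rw [enorm_eq_norm_toLp, enorm_eq_norm_toLp, WithLp.toLp_smul, norm_smul]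

lemma enorm_sq_of_norm_eq_one {v : Fin k → ℂ} (hv : ∀ i, ‖v i‖ = 1) : enorm v ^ 2 = k := by
  rw [enorm, Real.sq_sqrt (by positivity)]
  simp [hv]

lemma mul_enorm_le_of_forall_mul_norm_le {c : ℝ} (hc : 0 ≤ c) {v w : Fin k → ℂ}
    (h : ∀ i, c * ‖v i‖ ≤ ‖w i‖) : c * enorm v ≤ enorm w := by
  rw [← Complex.norm_of_nonneg hc, ← enorm_smul]
  refine Real.sqrt_le_sqrt (Finset.sum_le_sum fun i _ ↦ ?_)
  gcongr
  simpa [abs_of_nonneg hc] using h i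

end Enorm

section FixedPoint

variable {n : ℕ} {zstar z z' : Fin n → ℂ} {σ t : ℝ} {W : Matrix (Fin n) (Fin n) ℂ} {s s' : ℂ}

/-- The vector `z* s + σ W z` that `G zstar σ W z s t` truncates entrywise. -/
def preG (zstar : Fin n → ℂ) (σ : ℝ) (W : Matrix (Fin n) (Fin n) ℂ) (z : Fin n → ℂ) (s : ℂ) :
    Fin n → ℂ :=
  fun j => zstar j * s + (σ : ℂ) * W.mulVec z j

lemma preG_sub_preG (zstar : Fin n → ℂ) (σ : ℝ) (W : Matrix (Fin n) (Fin n) ℂ)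
    (z z' : Fin n → ℂ) (s s' : ℂ) :
    preG zstar σ W z s - preG zstar σ W z' s' =
      (s - s') • zstar + (σ : ℂ) • W.mulVec (z - z') := by
  ext j
  simp only [preG, Matrix.mulVec_sub, Pi.sub_apply, Pi.add_apply, Pi.smul_apply, smul_eq_mul]
  ring

lemma mul_enorm_sub_le_enorm_preG_sub (ht : 0 ≤ t)
    (hz : z = G zstar σ W z s t) (hz' : z' = G zstar σ W z' s' t) :
    t * enorm (z - z') ≤ enorm (preG zstar σ W z s - preG zstar σ W z' s') := by
  refine mul_enorm_le_of_forall_mul_norm_le ht fun j ↦ ?_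
  rw [Pi.sub_apply, congrFun hz j, congrFun hz' j]
  exact mul_norm_gfun_sub_le t _ _

lemma enorm_preG_sub_le (hσW : 2 * |σ| * opNorm W ≤ t)
    (h : t * enorm (z - z') ≤ enorm (preG zstar σ W z s - preG zstar σ W z' s')) :
    enorm (preG zstar σ W z s - preG zstar σ W z' s') ≤ 2 * (‖s - s'‖ * enorm zstar) := by
  set A := (σ : ℂ) • Matrix.toEuclideanCLM (𝕜 := ℂ) (n := Fin n) W
  have norm_A : ‖A‖ = |σ| * opNorm W := by
    rw [norm_smul, Complex.norm_real, Real.norm_eq_abs, opNorm]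
  have toLp_preG_sub : WithLp.toLp 2 (preG zstar σ W z s - preG zstar σ W z' s') =
      WithLp.toLp 2 ((s - s') • zstar) + A (WithLp.toLp 2 (z - z')) := by
    rw [preG_sub_preG]
    rfl
  rw [← enorm_smul]
  simp only [enorm_eq_norm_toLp, toLp_preG_sub] at h ⊢
  exact norm_add_apply_le_two_mul (by rwa [norm_A, ← mul_assoc]) h

end FixedPoint

theorem stmt15_general {n : ℕ} {zstar : Fin n → ℂ} {σ : ℝ} {W : Matrix (Fin n) (Fin n) ℂ}
    {s s' : ℂ} {t : ℝ} (ht : 0 < t) (hσW : 2 * |σ| * opNorm W ≤ t)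
    {z z' : Fin n → ℂ} (hz : z = G zstar σ W z s t) (hz' : z' = G zstar σ W z' s' t) :
    enorm (z - z') ^ 2 ≤ 4 * enorm zstar ^ 2 * t⁻¹ ^ 2 * ‖s - s'‖ ^ 2 ∧
    enorm (preG zstar σ W z s - preG zstar σ W z' s') ^ 2 ≤
      4 * enorm zstar ^ 2 * ‖s - s'‖ ^ 2 := by
  have mul_enorm_sub_le := mul_enorm_sub_le_enorm_preG_sub ht.le hz hz'
  have preG_sub_le := enorm_preG_sub_le hσW mul_enorm_sub_le
  have enorm_sub_le : enorm (z - z') ≤ t⁻¹ * (2 * (‖s - s'‖ * enorm zstar)) :=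
    (le_inv_mul_iff₀ ht).2 (mul_enorm_sub_le.trans preG_sub_le)
  constructor
  · calc enorm (z - z') ^ 2 ≤ (t⁻¹ * (2 * (‖s - s'‖ * enorm zstar))) ^ 2 :=
          pow_le_pow_left₀ (enorm_nonneg _) enorm_sub_le 2
      _ = 4 * enorm zstar ^ 2 * t⁻¹ ^ 2 * ‖s - s'‖ ^ 2 := by ring
  · calc enorm (preG zstar σ W z s - preG zstar σ W z' s') ^ 2
        ≤ (2 * (‖s - s'‖ * enorm zstar)) ^ 2 :=
          pow_le_pow_left₀ (enorm_nonneg _) preG_sub_le 2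
      _ = 4 * enorm zstar ^ 2 * ‖s - s'‖ ^ 2 := by ring

theorem stmt15 {n : ℕ} (hn : 1 ≤ n)
    (zstar : Fin n → ℂ) (hzstar : ∀ j, ‖zstar j‖ = 1)
    (σ : ℝ) (hσ : 0 < σ) (W : Matrix (Fin n) (Fin n) ℂ) (hW : W.IsHermitian)
    (s s' : ℂ) (t : ℝ) (ht : 0 < t) (ht2 : 2 * σ * opNorm W ≤ t)
    (z : Fin n → ℂ) (hz1 : ∀ i, ‖z i‖ ≤ 1) (hz2 : z = G zstar σ W z s t)
    (z' : Fin n → ℂ) (hz1' : ∀ i, ‖z' i‖ ≤ 1) (hz2' : z' = G zstar σ W z' s' t) :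
    enorm (z - z') ^ 2 ≤ 4 * (n : ℝ) * t⁻¹ ^ 2 * ‖s - s'‖ ^ 2 ∧
    enorm ((fun j => zstar j * s + (σ : ℂ) * W.mulVec z j) -
        (fun j => zstar j * s' + (σ : ℂ) * W.mulVec z' j)) ^ 2 ≤
      4 * (n : ℝ) * ‖s - s'‖ ^ 2 := by
  rw [← enorm_sq_of_norm_eq_one hzstar]
  exact stmt15_general ht (by rwa [abs_of_pos hσ]) hz2 hz2'

end PhaseSync
end
end
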